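/- Let k, l be natural numbers and let ∂₂ : ℂ^k → ℂ^{k+l} and ∂₁ : ℂ^{k+l} → ℂ^l be linear maps with ∂₁ ∘ ∂₂ = 0. Suppose J is a subset of the index set Fin (k+l) of cardinality l such that: (a) the l × l matrix ∂₁(J) formed by the columns of ∂₁ indexed by J is invertible, and (b) the k × k matrix ∂₂(J) obtained from ∂₂ by deleting the rows indexed by J is invertible. Then the complex 0 → ℂ^k → ℂ^{k+l} → ℂ^l → 0 is exact: ∂₂ is injective, ∂₁ is surjective, and the kernel of ∂₁ equals the range of ∂₂. -/

import Mathlib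

/-!
A vector `x` with `d1 *ᵥ x = 0` agrees off `J` with some `d2 *ᵥ v`, because `d2(J)` is invertible.
The difference `x - d2 *ᵥ v` is still killed by `d1` and is supported on `J`, so it is killed by
the invertible matrix `d1(J)` and vanishes. No dimension count enters, which is why the
argument works over any ring.
-/

open Function Matrix

section SubmatrixMulVec

variable {R m n p q : Type*} [Fintype n]

theorem mulVec_injective_of_submatrix_rows [NonUnitalNonAssocSemiring R]
    (A : Matrix m n R) (f : p → m) (hA : Injective (A.submatrix f id).mulVec) :
    Injective A.mulVec :=
  Injective.of_comp (f := fun y : m → R => y ∘ f) hA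

theorem mulVec_surjective_of_submatrix_cols [Semiring R] [Fintype p]
    (A : Matrix m n R) (f : p → n) (hA : Surjective (A.submatrix id f).mulVec) :
    Surjective A.mulVec := by
  classical
  have hmul : A.submatrix id f = A * (1 : Matrix n n R).submatrix id f := by
    simpa only [Matrix.mul_one, submatrix_id_id] using
      submatrix_mul A (1 : Matrix n n R) id id f bijective_id
  intro y
  obtain ⟨x, rfl⟩ := hA y
  exact ⟨(1 : Matrix n n R).submatrix id f *ᵥ x, by rw [mulVec_mulVec, hmul]⟩

theorem mulVec_eq_submatrix_inl_add_submatrix_inr [NonUnitalNonAssocSemiring R]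
    [Fintype p] [Fintype q] (A : Matrix m n R) (e : p ⊕ q ≃ n) (x : n → R) :
    A *ᵥ x = A.submatrix id (e ∘ Sum.inl) *ᵥ (x ∘ e ∘ Sum.inl) +
      A.submatrix id (e ∘ Sum.inr) *ᵥ (x ∘ e ∘ Sum.inr) := by
  ext i
  exact (e.sum_comp fun j => A i j * x j).symm.trans (Fintype.sum_sum_type _)

theorem exact_mulVec_of_submatrix [NonUnitalRing R] [Fintype m] [Fintype p] [Finite q]
    {A : Matrix p m R} {B : Matrix m n R} (hAB : A * B = 0) (e : p ⊕ q ≃ m)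
    (hA : Injective (A.submatrix id (e ∘ Sum.inl)).mulVec)
    (hB : Surjective (B.submatrix (e ∘ Sum.inr) id).mulVec) :
    Exact B.mulVec A.mulVec := by
  cases nonempty_fintype q
  refine fun x => ⟨fun hx => ?_, ?_⟩
  · obtain ⟨v, hv⟩ := hB (x ∘ e ∘ Sum.inr)
    have h_inr : (x - B *ᵥ v) ∘ e ∘ Sum.inr = 0 := sub_eq_zero.mpr hv.symm
    have h_ker : A *ᵥ (x - B *ᵥ v) = 0 := by
      rw [mulVec_sub, hx, mulVec_mulVec, hAB, zero_mulVec, sub_zero]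
    have h_inl : (x - B *ᵥ v) ∘ e ∘ Sum.inl = 0 := by
      rw [mulVec_eq_submatrix_inl_add_submatrix_inr A e, h_inr, mulVec_zero, add_zero] at h_ker
      exact hA (h_ker.trans (mulVec_zero _).symm)
    have h_zero : x - B *ᵥ v = 0 :=
      funext <| e.forall_congr_right.mp <| Sum.forall.mpr ⟨congrFun h_inl, congrFun h_inr⟩
    exact ⟨v, (sub_eq_zero.mp h_zero).symm⟩
  · rintro ⟨v, rfl⟩
    rw [mulVec_mulVec, hAB, zero_mulVec]

end SubmatrixMulVec

theorem mulVec_surjective_of_isUnit {R n : Type*} [Semiring R] [Fintype n] [DecidableEq n]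
    {A : Matrix n n R} (hA : IsUnit A) : Surjective A.mulVec := by
  obtain ⟨B, hAB⟩ := hA.exists_right_inv
  exact fun y => ⟨B *ᵥ y, by rw [mulVec_mulVec, hAB, one_mulVec]⟩

theorem stmt_10_general {R ι κ l : Type*} [Ring R] [Fintype ι] [Fintype κ] [Fintype l]
    [DecidableEq κ] [DecidableEq l] (d2 : Matrix ι κ R) (d1 : Matrix l ι R)
    (hcomp : d1 * d2 = 0) (e : l ⊕ κ ≃ ι)
    (h1 : IsUnit (d1.submatrix id (e ∘ Sum.inl)))
    (h2 : IsUnit (d2.submatrix (e ∘ Sum.inr) id)) :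
    Injective d2.mulVec ∧ Surjective d1.mulVec ∧ Exact d2.mulVec d1.mulVec :=
  ⟨mulVec_injective_of_submatrix_rows d2 _ (mulVec_injective_of_isUnit h2),
    mulVec_surjective_of_submatrix_cols d1 _ (mulVec_surjective_of_isUnit h1),
    exact_mulVec_of_submatrix hcomp e (mulVec_injective_of_isUnit h1)
      (mulVec_surjective_of_isUnit h2)⟩

theorem stmt_10 (k l : ℕ)
    (d2 : Matrix (Fin (k + l)) (Fin k) ℂ) (d1 : Matrix (Fin l) (Fin (k + l)) ℂ)
    (hcomp : d1 * d2 = 0)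
    (J : Finset (Fin (k + l))) (hJ : J.card = l) (hJc : Jᶜ.card = k)
    (h1 : IsUnit (d1.submatrix id (fun i => ((J.orderIsoOfFin hJ) i : Fin (k + l)))))
    (h2 : IsUnit (d2.submatrix (fun i => ((Jᶜ.orderIsoOfFin hJc) i : Fin (k + l))) id)) :
    Function.Injective d2.mulVecLin ∧ Function.Surjective d1.mulVecLin ∧
      LinearMap.ker d1.mulVecLin = LinearMap.range d2.mulVecLin := by
  obtain ⟨hinj, hsurj, hexact⟩ :=
    stmt_10_general d2 d1 hcomp (finSumEquivOfFinset hJ hJc) h1 h2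
  exact ⟨hinj, hsurj, LinearMap.exact_iff.mp hexact⟩
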